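/- arXiv:1809.10607 — 3 statements merged into one kernel-verified Lean document; each statement's English description precedes it below -/
import Mathlib

section
/- For every real number x, ∑_{n=0}^∞ x^n/(n!)^3 = (1/(4π^2)) ∫_0^{2π} ∫_0^{2π} e^{x e^{is}} · e^{(e^{-is}+1) cos t} · cos((e^{-is}-1) sin t) ds dt, where the integrand is complex-valued (with e^{is} = cos s + i sin s, and cos of a complex argument the complex cosine), and the double integral equals the real number on the left. -/
open Nat Real Complex intervalIntegral

/-!
If `f(z) = ∑ aₙ zⁿ` and `g(z) = ∑ bₙ zⁿ` converge absolutely on the unit circle, then by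
orthogonality of the characters `zⁿ` the average of `f(z) g(z⁻¹)` over the circle is `∑ aₙ bₙ`.
Write `α(x, r) = ∑ xⁿ / (n!)ʳ`, so that `α(x, 1) = eˣ`. Averaging `e^{xz} e^{yz⁻¹}` over `z` gives
`α(xy, 2)`, and averaging `e^w α(x w⁻¹, 2)` over `w` gives `α(x, 3)`; hence `α(x, 3)` is the average
over `w` and `z` of `e^{xz} e^{w + w⁻¹ z⁻¹}`. Replacing `w` by `w⁻¹` does not change it, and for
`z = e^{is}`, `w = e^{it}` Euler's formula identifies the mean of these two kernels with the
integrand of the theorem.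
-/

section CircleAverage

variable {E : Type*} [NormedAddCommGroup E]

lemma continuousOn_inv_sphere_zero_one :
    ContinuousOn (fun z : ℂ ↦ z⁻¹) (Metric.sphere 0 1) :=
  continuousOn_inv₀.mono fun _ hz ↦ Metric.ne_of_mem_sphere hz one_ne_zero

lemma hasSum_circleAverage_of_summable_bound [NormedSpace ℝ E] [CompleteSpace E]
    {ι : Type*} [Countable ι] {F : ι → ℂ → E} {c : ℂ} {R : ℝ} {bound : ι → ℝ}
    (hF : ∀ i, CircleIntegrable (F i) c R) (hbound : Summable bound)
    (hF_le : ∀ i, ∀ z ∈ Metric.sphere c |R|, ‖F i z‖ ≤ bound i) :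
    HasSum (fun i ↦ circleAverage (F i) c R) (circleAverage (fun z ↦ ∑' i, F i z) c R) := by
  have hF_le' (i : ι) (θ : ℝ) : ‖F i (circleMap c R θ)‖ ≤ bound i :=
    hF_le i _ (circleMap_mem_sphere' c R θ)
  refine (intervalIntegral.hasSum_integral_of_dominated_convergence (fun i _ ↦ bound i)
    (fun i ↦ (hF i).def'.aestronglyMeasurable) (fun i ↦ .of_forall fun θ _ ↦ hF_le' i θ)
    (.of_forall fun _ _ ↦ hbound) intervalIntegrable_const
    (.of_forall fun θ _ ↦ ?_)).const_smul _
  exact (hbound.of_norm_bounded (hF_le' · θ)).hasSum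

lemma circleAverage_smul_const [NormedSpace ℂ E] [CompleteSpace E] (f : ℂ → ℂ) (a : E) (c : ℂ)
    (R : ℝ) : circleAverage (fun z ↦ f z • a) c R = circleAverage f c R • a := by
  simp_rw [circleAverage_def, intervalIntegral.integral_smul_const, smul_assoc]

lemma circleIntegrable_comp_inv {f : ℂ → E} (hf : CircleIntegrable f 0 1) :
    CircleIntegrable (fun z ↦ f z⁻¹) 0 1 := by
  have hperiodic : (fun θ ↦ f (circleMap 0 1 θ)).Periodic (2 * π) := fun θ ↦ by
    simp only [periodic_circleMap 0 1 θ]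
  have hneg : IntervalIntegrable (fun θ ↦ f (circleMap 0 1 θ)) MeasureTheory.volume
      0 (-(2 * π)) := hperiodic.intervalIntegrable₀ two_pi_pos.ne' hf _ _
  rw [IntervalIntegrable.iff_comp_neg] at hneg
  simpa [CircleIntegrable, circleMap_zero_inv] using hneg

lemma circleAverage_zero_one_add_comp_inv [NormedSpace ℝ E] {f : ℂ → E}
    (hf : CircleIntegrable f 0 1) :
    circleAverage (fun z ↦ f z + f z⁻¹) 0 1 = (2 : ℝ) • circleAverage f 0 1 := by
  rw [circleAverage_fun_add hf (circleIntegrable_comp_inv hf), circleAverage_zero_one_congr_inv,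
    two_smul]

lemma integral_comp_exp_I_mul [NormedSpace ℝ E] (f : ℂ → E) :
    ∫ t in (0 : ℝ)..2 * π, f (Complex.exp (I * t)) = (2 * π) • circleAverage f 0 1 := by
  rw [circleAverage_def, smul_inv_smul₀ two_pi_pos.ne']
  simp [circleMap, mul_comm I]

lemma integral_integral_comp_exp_I_mul [NormedSpace ℝ E] (f : ℂ → ℂ → E) :
    ∫ t in (0 : ℝ)..2 * π, ∫ s in (0 : ℝ)..2 * π,
        f (Complex.exp (I * t)) (Complex.exp (I * s)) =
      (4 * π ^ 2) • circleAverage (fun w ↦ circleAverage (f w) 0 1) 0 1 := by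
  simp_rw [integral_comp_exp_I_mul, intervalIntegral.integral_smul,
    integral_comp_exp_I_mul fun w ↦ circleAverage (f w) 0 1, smul_smul]
  ring_nf

lemma circleAverage_sub_zpow_of_ne_zero {n : ℤ} (hn : n ≠ 0) (c : ℂ) {R : ℝ} (hR : R ≠ 0) :
    circleAverage (fun z ↦ (z - c) ^ n) c R = 0 := by
  have hmul (θ : ℝ) : (circleMap c R θ - c)⁻¹ • (circleMap c R θ - c) ^ n =
      (circleMap c R θ - c) ^ (n - 1) := by
    rw [smul_eq_mul, zpow_sub_one₀ (sub_ne_zero.2 (circleMap_ne_center hR)), mul_comm]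
  have hint : ∮ z in C(c, R), (z - c)⁻¹ • (z - c) ^ n = ∮ z in C(c, R), (z - c) ^ (n - 1) := by
    simp_rw [circleIntegral, hmul]
  rw [circleAverage_eq_circleIntegral hR, hint,
    circleIntegral.integral_sub_zpow_of_ne (by omega), smul_zero]

lemma circleAverage_pow_mul_inv_pow (m n : ℕ) :
    circleAverage (fun z ↦ z ^ m * z⁻¹ ^ n) 0 1 = if m = n then 1 else 0 := by
  have hzpow : ∀ z ∈ Metric.sphere (0 : ℂ) |1|, z ^ m * z⁻¹ ^ n = (z - 0) ^ (m - n : ℤ) :=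
    fun z hz ↦ by
      have hz : z ≠ 0 := Metric.ne_of_mem_sphere hz (by simp)
      rw [sub_zero, zpow_sub₀ hz, zpow_natCast, zpow_natCast, inv_pow, div_eq_mul_inv]
  rw [circleAverage_congr_sphere hzpow]
  split_ifs with hmn
  · simp [hmn, circleAverage_const]
  · exact circleAverage_sub_zpow_of_ne_zero (by omega) 0 one_ne_zero

lemma tsum_ite_fst_eq_snd {ι M : Type*} [DecidableEq ι] [AddCommMonoid M] [TopologicalSpace M]
    (f : ι × ι → M) : ∑' p : ι × ι, (if p.1 = p.2 then f p else 0) = ∑' i, f (i, i) := by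
  have hsupport : (Function.support fun p : ι × ι ↦ if p.1 = p.2 then f p else 0) ⊆
      Set.range fun i ↦ (i, i) := fun p hp ↦
    ⟨p.1, Prod.ext rfl (of_not_not fun hne ↦ hp (if_neg hne))⟩
  rw [← Function.Injective.tsum_eq (fun _ _ h ↦ congrArg Prod.fst h) hsupport]
  simp

lemma circleAverage_tsum_mul_tsum_inv {A : Type*} [NormedRing A] [NormedAlgebra ℂ A]
    [CompleteSpace A] {a b : ℕ → A} (ha : Summable (‖a ·‖)) (hb : Summable (‖b ·‖)) :
    circleAverage (fun z ↦ (∑' n, z ^ n • a n) * ∑' n, z⁻¹ ^ n • b n) 0 1 =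
      ∑' n, a n * b n := by
  let F (p : ℕ × ℕ) (z : ℂ) : A := (z ^ p.1 * z⁻¹ ^ p.2) • (a p.1 * b p.2)
  have hprod : ∀ z ∈ Metric.sphere (0 : ℂ) |1|,
      (∑' n, z ^ n • a n) * ∑' n, z⁻¹ ^ n • b n = ∑' p, F p z := fun z hz ↦ by
    have hz : ‖z‖ = 1 := by simpa using hz
    rw [tsum_mul_tsum_of_summable_norm (by simpa [norm_smul, hz]) (by simpa [norm_smul, hz])]
    simp only [F, smul_mul_smul_comm]
  have hF_int (p : ℕ × ℕ) : CircleIntegrable (F p) 0 1 := by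
    have hinv := continuousOn_inv_sphere_zero_one
    exact ContinuousOn.circleIntegrable zero_le_one (by fun_prop)
  have hF_le (p : ℕ × ℕ) (z : ℂ) (hz : z ∈ Metric.sphere (0 : ℂ) |1|) :
      ‖F p z‖ ≤ ‖a p.1‖ * ‖b p.2‖ := by
    have hz : ‖z‖ = 1 := by simpa using hz
    simpa [F, norm_smul, hz] using norm_mul_le (a p.1) (b p.2)
  have hF_avg (p : ℕ × ℕ) :
      circleAverage (F p) 0 1 = if p.1 = p.2 then a p.1 * b p.2 else 0 := by
    rw [circleAverage_smul_const, circleAverage_pow_mul_inv_pow, ite_smul, one_smul, zero_smul]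
  rw [circleAverage_congr_sphere hprod, ← (hasSum_circleAverage_of_summable_bound hF_int
    (ha.mul_of_nonneg hb (fun _ ↦ norm_nonneg _) fun _ ↦ norm_nonneg _) hF_le).tsum_eq]
  simp_rw [hF_avg, tsum_ite_fst_eq_snd]

end CircleAverage

/-- The alpha function `α(x, r) = ∑ xⁿ / (n!)ʳ`, for a natural number exponent `r`. At `r = 0`
the series is geometric, and the value for `1 ≤ ‖x‖` is the junk value `0`. -/
noncomputable def alpha (x : ℂ) (r : ℕ) : ℂ :=
  ∑' n : ℕ, x ^ n / (n ! : ℂ) ^ r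

section Alpha

variable {r s : ℕ}

lemma alpha_one (x : ℂ) : alpha x 1 = Complex.exp x := by
  simp [alpha, Complex.exp_eq_exp_ℂ, NormedSpace.exp_eq_tsum_div]

lemma alpha_mul (x y : ℂ) (r : ℕ) :
    alpha (x * y) r = ∑' n : ℕ, y ^ n • (x ^ n / (n ! : ℂ) ^ r) := by
  simp_rw [alpha, smul_eq_mul, mul_pow, mul_comm (x ^ _), mul_div_assoc]

lemma norm_pow_div_factorial_pow_le (hr : r ≠ 0) (x : ℂ) (n : ℕ) :
    ‖x ^ n / (n ! : ℂ) ^ r‖ ≤ ‖x‖ ^ n / n ! := by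
  have hn : (1 : ℝ) ≤ n ! := by exact_mod_cast n.factorial_pos
  simp only [norm_div, norm_pow, Complex.norm_natCast]
  gcongr
  exact le_self_pow₀ hn hr

lemma summable_norm_pow_div_factorial_pow (hr : r ≠ 0) (x : ℂ) :
    Summable fun n : ℕ ↦ ‖x ^ n / (n ! : ℂ) ^ r‖ :=
  (Real.summable_pow_div_factorial ‖x‖).of_nonneg_of_le (fun _ ↦ norm_nonneg _)
    (norm_pow_div_factorial_pow_le hr x)

lemma continuous_alpha (hr : r ≠ 0) : Continuous fun x ↦ alpha x r := by
  refine continuous_iff_continuousAt.2 fun x ↦ ?_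
  have hball : ContinuousOn (fun y ↦ alpha y r) (Metric.ball 0 (‖x‖ + 1)) := by
    refine continuousOn_tsum (fun n ↦ by fun_prop)
      (Real.summable_pow_div_factorial (‖x‖ + 1)) fun n y hy ↦ ?_
    have hy : ‖y‖ ≤ ‖x‖ + 1 := (mem_ball_zero_iff.1 hy).le
    exact (norm_pow_div_factorial_pow_le hr y n).trans (by gcongr)
  exact hball.continuousAt (Metric.isOpen_ball.mem_nhds (by simp))

lemma circleAverage_alpha_mul_alpha_inv (hr : r ≠ 0) (hs : s ≠ 0) (x y : ℂ) :
    circleAverage (fun z ↦ alpha (x * z) r * alpha (y * z⁻¹) s) 0 1 = alpha (x * y) (r + s) := by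
  simp_rw [alpha_mul]
  rw [circleAverage_tsum_mul_tsum_inv (summable_norm_pow_div_factorial_pow hr x)
    (summable_norm_pow_div_factorial_pow hs y)]
  exact tsum_congr fun n ↦ by rw [smul_eq_mul]; ring

lemma circleAverage_exp_mul_exp_inv (x y : ℂ) :
    circleAverage (fun z ↦ Complex.exp (x * z) * Complex.exp (y * z⁻¹)) 0 1 =
      alpha (x * y) 2 := by
  simp_rw [← alpha_one]
  exact circleAverage_alpha_mul_alpha_inv one_ne_zero one_ne_zero x y

lemma circleAverage_exp_mul_alpha_two_inv (x : ℂ) :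
    circleAverage (fun w ↦ Complex.exp w * alpha (x * w⁻¹) 2) 0 1 = alpha x 3 := by
  simpa [alpha_one] using circleAverage_alpha_mul_alpha_inv one_ne_zero two_ne_zero 1 x

end Alpha

section DoubleIntegral

/-- The kernel whose average over the unit circle in both variables is `α(x, 3)`. -/
noncomputable def alphaThreeKernel (x w z : ℂ) : ℂ :=
  Complex.exp (x * z) * Complex.exp (w + w⁻¹ * z⁻¹)

lemma circleAverage_alphaThreeKernel (x w : ℂ) :
    circleAverage (alphaThreeKernel x w) 0 1 = Complex.exp w * alpha (x * w⁻¹) 2 := by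
  rw [← circleAverage_exp_mul_exp_inv, ← smul_eq_mul, ← circleAverage_fun_smul]
  congr 1 with z
  rw [alphaThreeKernel, Complex.exp_add, smul_eq_mul, mul_left_comm]

lemma circleIntegrable_alphaThreeKernel (x w : ℂ) :
    CircleIntegrable (alphaThreeKernel x w) 0 1 := by
  unfold alphaThreeKernel
  have hinv := continuousOn_inv_sphere_zero_one
  exact ContinuousOn.circleIntegrable zero_le_one (by fun_prop)

lemma circleAverage_circleAverage_alphaThreeKernel_add_inv (x : ℂ) :
    circleAverage (fun w ↦ circleAverage
      (fun z ↦ alphaThreeKernel x w z + alphaThreeKernel x w⁻¹ z) 0 1) 0 1 = 2 * alpha x 3 := by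
  have hint : CircleIntegrable (fun w ↦ Complex.exp w * alpha (x * w⁻¹) 2) 0 1 :=
    ContinuousOn.circleIntegrable zero_le_one <|
      continuousOn_id.cexp.mul <| (continuous_alpha two_ne_zero).comp_continuousOn <|
        continuousOn_const.mul continuousOn_inv_sphere_zero_one
  simp_rw [circleAverage_fun_add (circleIntegrable_alphaThreeKernel x _)
    (circleIntegrable_alphaThreeKernel x _), circleAverage_alphaThreeKernel]
  rw [circleAverage_zero_one_add_comp_inv hint, circleAverage_exp_mul_alpha_two_inv]
  simp

lemma exp_add_one_mul_cos_mul_cos_sub_one_mul_sin (z t : ℂ) :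
    Complex.exp ((z + 1) * Complex.cos t) * Complex.cos ((z - 1) * Complex.sin t) =
      (Complex.exp (Complex.exp (I * t) + (Complex.exp (I * t))⁻¹ * z) +
        Complex.exp ((Complex.exp (I * t))⁻¹ + Complex.exp (I * t) * z)) / 2 := by
  have hexp_pos : Complex.exp (I * t) = Complex.cos t + Complex.sin t * I := by
    rw [mul_comm, Complex.exp_mul_I]
  have hexp_inv : (Complex.exp (I * t))⁻¹ = Complex.cos t - Complex.sin t * I := by
    rw [← Complex.exp_neg, ← mul_neg, mul_comm, Complex.exp_mul_I, Complex.cos_neg,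
      Complex.sin_neg, neg_mul, sub_eq_add_neg]
  rw [eq_div_iff two_ne_zero, mul_assoc, mul_comm _ (2 : ℂ), two_cos, mul_add, hexp_inv, hexp_pos,
    ← Complex.exp_add, ← Complex.exp_add, add_comm (Complex.exp _)]
  congr 2 <;> ring

theorem alpha_three_complex_double_integral_general (x : ℂ) :
    ∑' n : ℕ, x ^ n / (n ! : ℂ) ^ 3 =
      (1 / (4 * (π : ℂ) ^ 2)) *
        ∫ t in (0 : ℝ)..(2 * π), ∫ s in (0 : ℝ)..(2 * π),
          Complex.exp (x * Complex.exp (I * s)) *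
          Complex.exp ((Complex.exp (-I * s) + 1) * (Real.cos t : ℂ)) *
          Complex.cos ((Complex.exp (-I * s) - 1) * (Real.sin t : ℂ)) := by
  let K (w z : ℂ) : ℂ := alphaThreeKernel x w z + alphaThreeKernel x w⁻¹ z
  have hintegrand (t s : ℝ) :
      Complex.exp (x * Complex.exp (I * s)) *
          Complex.exp ((Complex.exp (-I * s) + 1) * (Real.cos t : ℂ)) *
          Complex.cos ((Complex.exp (-I * s) - 1) * (Real.sin t : ℂ)) =
        K (Complex.exp (I * t)) (Complex.exp (I * s)) / 2 := by
    rw [mul_assoc, ofReal_cos, ofReal_sin, exp_add_one_mul_cos_mul_cos_sub_one_mul_sin, neg_mul,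
      Complex.exp_neg]
    simp only [K, alphaThreeKernel, inv_inv]
    ring
  have haverage : circleAverage (fun w ↦ circleAverage (K w) 0 1) 0 1 = 2 * alpha x 3 :=
    circleAverage_circleAverage_alphaThreeKernel_add_inv x
  simp_rw [hintegrand, intervalIntegral.integral_div, integral_integral_comp_exp_I_mul, haverage,
    Complex.real_smul]
  have hpi : (π : ℂ) ≠ 0 := ofReal_ne_zero.2 pi_ne_zero
  push_cast
  rw [alpha]
  field_simp

end DoubleIntegral

/-- For every real `x`,
`∑ xⁿ/(n!)³ = (1/(4π²)) ∫₀^{2π} ∫₀^{2π} e^{x e^{is}} e^{(e^{-is}+1) cos t} cos((e^{-is}-1) sin t) ds dt`,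
a complex double integral whose value is the real number on the left. -/
theorem alpha_three_complex_double_integral (x : ℝ) :
    ((∑' n : ℕ, x ^ n / (n ! : ℝ) ^ 3 : ℝ) : ℂ) =
      (1 / (4 * (Real.pi : ℂ) ^ 2)) *
        ∫ t in (0:ℝ)..(2 * Real.pi), ∫ s in (0:ℝ)..(2 * Real.pi),
          Complex.exp ((x : ℂ) * Complex.exp (Complex.I * s)) *
          Complex.exp ((Complex.exp (-Complex.I * s) + 1) * (Real.cos t : ℂ)) *
          Complex.cos ((Complex.exp (-Complex.I * s) - 1) * (Real.sin t : ℂ)) := by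
  exact_mod_cast alpha_three_complex_double_integral_general x
end

section
/- ∑_{n=0}^∞ 1/(n!)^3 = (1/(4π^2)) ∫_0^{2π} ∫_0^{2π} e^{cos s + cos s cos t + cos t} cos(sin s − sin s cos t) cos(cos s sin t − sin t) cosh(sin s sin t) ds dt − (1/(4π^2)) ∫_0^{2π} ∫_0^{2π} e^{cos s + cos s cos t + cos t} sin(sin s − sin s cos t) sin(cos s sin t − sin t) sinh(sin s sin t) ds dt. -/
/-!
For `|x| = |y| = 1` the series `exp (x + y + 1 / (x y)) = exp x * exp y * exp (1 / (x y))` has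
constant term `∑ 1 / (n!)³`, and averaging over the torus extracts it, one variable at a time, by
the Parseval formula for absolutely summable series. Complex conjugation of `y` preserves the
average. Writing `1 / (x y)` as the conjugate of `x y`, the mean of the real parts at `(x, y)` and
`(x, conj y)` is, by the addition formulas, the `cosh` integrand minus the `sinh` integrand.
-/

open Nat Real intervalIntegral

open Metric Function
open scoped ComplexConjugate

section CircleAverage

variable {E : Type*} [NormedAddCommGroup E] [NormedSpace ℝ E]

lemma circleAverage_tsum [CompleteSpace E] {ι : Type*} [Countable ι] {F : ι → ℂ → E} {u : ι → ℝ}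
    {c : ℂ} {R : ℝ} (hF : ∀ i, CircleIntegrable (F i) c R) (hu : Summable u)
    (hFu : ∀ i, ∀ z ∈ sphere c |R|, ‖F i z‖ ≤ u i) :
    circleAverage (fun z ↦ ∑' i, F i z) c R = ∑' i, circleAverage (F i) c R := by
  have hle (i : ι) (θ : ℝ) : ‖F i (circleMap c R θ)‖ ≤ u i :=
    hFu i _ (circleMap_mem_sphere' c R θ)
  have hsum : HasSum (fun i ↦ ∫ θ in 0..2 * π, F i (circleMap c R θ))
      (∫ θ in 0..2 * π, ∑' i, F i (circleMap c R θ)) :=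
    hasSum_integral_of_dominated_convergence (fun i _ ↦ u i)
      (fun i ↦ (hF i).def'.aestronglyMeasurable)
      (fun i ↦ .of_forall fun θ _ ↦ hle i θ)
      (.of_forall fun _ _ ↦ hu)
      intervalIntegrable_const
      (.of_forall fun θ _ ↦ (hu.of_norm_bounded fun i ↦ hle i θ).hasSum)
  exact (hsum.const_smul _).tsum_eq.symm

lemma circleAverage_comp_conj (f : ℂ → E) (c : ℂ) (R : ℝ) :
    circleAverage (fun z ↦ f (conj z)) c R = circleAverage f (conj c) R := by
  rw [circleAverage_eq_circleAverage_zero_one, circleAverage_eq_circleAverage_zero_one (f := f),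
    ← circleAverage_zero_one_congr_inv (f := fun z ↦ f (R * z + conj c))]
  refine circleAverage_congr_sphere fun z hz ↦ ?_
  have hz' : ‖z‖ = 1 := by simpa using hz
  simp [Complex.inv_eq_conj hz']

lemma circleAverage_sub_center_zpow {k : ℤ} (hk : k ≠ 0) (c : ℂ) (R : ℝ) :
    circleAverage (fun z ↦ (z - c) ^ k) c R = 0 := by
  rcases eq_or_ne R 0 with rfl | hR
  · simp [zero_zpow k hk]
  have hzpow : Set.EqOn (fun z ↦ (z - c)⁻¹ • (z - c) ^ k) (fun z ↦ (z - c) ^ (k - 1))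
      (sphere c |R|) := fun z hz ↦ by
    have hzc : z - c ≠ 0 := sub_ne_zero.2 (ne_of_mem_sphere hz (abs_ne_zero.2 hR))
    simp [zpow_sub_one₀ hzc, mul_comm]
  rw [← circleAverage_abs_radius, circleAverage_eq_circleIntegral (abs_ne_zero.2 hR),
    circleIntegral.integral_congr (abs_nonneg R) hzpow,
    circleIntegral.integral_sub_zpow_of_ne (by lia), smul_zero]

lemma circleAverage_pow_mul_conj_pow (m n : ℕ) :
    circleAverage (fun z ↦ z ^ m * conj z ^ n) 0 1 = if m = n then 1 else 0 := by
  have hzpow : Set.EqOn (fun z : ℂ ↦ z ^ m * conj z ^ n) (fun z ↦ (z - 0) ^ (m - n : ℤ))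
      (sphere 0 |1|) := fun z hz ↦ by
    have hz' : ‖z‖ = 1 := by simpa using hz
    have hz0 : z ≠ 0 := by rintro rfl; simp at hz'
    simp [← Complex.inv_eq_conj hz', zpow_sub₀ hz0, div_eq_mul_inv]
  rw [circleAverage_congr_sphere hzpow]
  split_ifs with hmn
  · simp [hmn, circleAverage_const]
  · exact circleAverage_sub_center_zpow (sub_ne_zero.2 (mod_cast hmn)) 0 1

lemma circleAverage_tsum_pow_mul_tsum_conj_pow {a b : ℕ → ℂ} (ha : Summable (‖a ·‖))
    (hb : Summable (‖b ·‖)) :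
    circleAverage (fun z ↦ (∑' n, a n * z ^ n) * ∑' n, b n * conj z ^ n) 0 1 =
      ∑' n, a n * b n := by
  have hab : Summable fun p : ℕ × ℕ ↦ ‖a p.1 * b p.2‖ := ha.mul_norm hb
  have hprod : Set.EqOn (fun z ↦ (∑' n, a n * z ^ n) * ∑' n, b n * conj z ^ n)
      (fun z ↦ ∑' p : ℕ × ℕ, a p.1 * b p.2 * (z ^ p.1 * conj z ^ p.2)) (sphere 0 |1|) :=
    fun z hz ↦ by
      have hz' : ‖z‖ = 1 := by simpa using hz
      simp only
      rw [tsum_mul_tsum_of_summable_norm (by simpa [hz'] using ha) (by simpa [hz'] using hb)]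
      exact tsum_congr fun p ↦ mul_mul_mul_comm _ _ _ _
  calc circleAverage (fun z ↦ (∑' n, a n * z ^ n) * ∑' n, b n * conj z ^ n) 0 1
    _ = ∑' p : ℕ × ℕ, circleAverage (fun z ↦ a p.1 * b p.2 * (z ^ p.1 * conj z ^ p.2)) 0 1 := by
      rw [circleAverage_congr_sphere hprod]
      refine circleAverage_tsum (fun p ↦ ?_) hab fun p z hz ↦ ?_
      · exact (by fun_prop : Continuous fun z : ℂ ↦
          a p.1 * b p.2 * (z ^ p.1 * conj z ^ p.2)).continuousOn.circleIntegrable'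
      · have hz' : ‖z‖ = 1 := by simpa using hz
        simp [hz']
    _ = ∑' p : ℕ × ℕ, if p.1 = p.2 then a p.1 * b p.2 else 0 := by
      simp_rw [← smul_eq_mul (a _ * b _), circleAverage_fun_smul, circleAverage_pow_mul_conj_pow]
      simp
    _ = ∑' m, ∑' n, if m = n then a m * b n else 0 :=
      (hab.of_norm_bounded fun p ↦ by split_ifs <;> simp [mul_nonneg]).tsum_prod
    _ = ∑' n, a n * b n := by simp

lemma continuous_parametric_circleAverage {X : Type*} [TopologicalSpace X] {f : ℂ → X → E}
    (hf : Continuous (uncurry f)) (c : ℂ) (R : ℝ) :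
    Continuous fun y ↦ circleAverage (f · y) c R := by
  refine (continuous_parametric_intervalIntegral_of_continuous' ?_ _ _).const_smul _
  exact hf.comp (by fun_prop : Continuous fun p : X × ℝ ↦ (circleMap c R p.2, p.1))

end CircleAverage

section TorusAverage

variable {E : Type*} [NormedAddCommGroup E] [NormedSpace ℝ E] {f g : ℂ → ℂ → E}

/-- The mean value of `f` over the torus `|x| = |y| = 1`, as an iterated circle average, with the
average over the first variable taken first. -/
noncomputable def torusAverage (f : ℂ → ℂ → E) : E :=
  circleAverage (fun y ↦ circleAverage (f · y) 0 1) 0 1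

lemma torusAverage_eq_integral (f : ℂ → ℂ → E) :
    torusAverage f = (1 / (4 * π ^ 2)) •
      ∫ t in 0..2 * π, ∫ s in 0..2 * π, f (circleMap 0 1 s) (circleMap 0 1 t) := by
  simp only [torusAverage, circleAverage, integral_smul, smul_smul]
  congr 1
  ring

lemma torusAverage_add (hf : Continuous (uncurry f)) (hg : Continuous (uncurry g)) :
    torusAverage (fun x y ↦ f x y + g x y) = torusAverage f + torusAverage g := by
  have hinner (y : ℂ) : circleAverage (fun x ↦ f x y + g x y) 0 1 =
      circleAverage (f · y) 0 1 + circleAverage (g · y) 0 1 :=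
    circleAverage_fun_add (hf.uncurry_right y).continuousOn.circleIntegrable'
      (hg.uncurry_right y).continuousOn.circleIntegrable'
  simp_rw [torusAverage, hinner]
  exact circleAverage_fun_add
    (continuous_parametric_circleAverage hf 0 1).continuousOn.circleIntegrable'
    (continuous_parametric_circleAverage hg 0 1).continuousOn.circleIntegrable'

lemma torusAverage_clm_comp [CompleteSpace E] {F : Type*} [NormedAddCommGroup F] [NormedSpace ℝ F]
    [CompleteSpace F] (L : E →L[ℝ] F) (hf : Continuous (uncurry f)) :
    torusAverage (fun x y ↦ L (f x y)) = L (torusAverage f) := by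
  have hinner (y : ℂ) : circleAverage (fun x ↦ L (f x y)) 0 1 = L (circleAverage (f · y) 0 1) :=
    L.circleAverage_comp_comm (hf.uncurry_right y).continuousOn.circleIntegrable'
  simp_rw [torusAverage, hinner]
  exact L.circleAverage_comp_comm
    (continuous_parametric_circleAverage hf 0 1).continuousOn.circleIntegrable'

lemma torusAverage_comp_conj_right (f : ℂ → ℂ → E) :
    torusAverage (fun x y ↦ f x (conj y)) = torusAverage f := by
  simpa [torusAverage] using circleAverage_comp_conj (fun y ↦ circleAverage (f · y) 0 1) 0 1

lemma torusAverage_tsum_mul_tsum_mul_tsum {a b c : ℕ → ℂ} (ha : Summable (‖a ·‖))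
    (hb : Summable (‖b ·‖)) (hc : Summable (‖c ·‖)) :
    torusAverage (fun x y ↦ (∑' n, a n * x ^ n) * (∑' n, b n * y ^ n) *
      ∑' n, c n * conj (x * y) ^ n) = ∑' n, a n * b n * c n := by
  have hinner : Set.EqOn
      (fun y ↦ circleAverage (fun x ↦ (∑' n, a n * x ^ n) * (∑' n, b n * y ^ n) *
        ∑' n, c n * conj (x * y) ^ n) 0 1)
      (fun y ↦ (∑' n, b n * y ^ n) * ∑' n, a n * c n * conj y ^ n) (sphere 0 |1|) := fun y hy ↦ by
    have hy' : ‖y‖ = 1 := by simpa using hy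
    have hcy : Summable fun n ↦ ‖c n * conj y ^ n‖ := by simpa [hy'] using hc
    simp only [mul_assoc (a _), ← circleAverage_tsum_pow_mul_tsum_conj_pow ha hcy]
    rw [← smul_eq_mul, ← circleAverage_fun_smul]
    simp only [smul_eq_mul, map_mul, mul_pow, mul_assoc, mul_comm]
  have hac : Summable fun n ↦ ‖a n * c n‖ :=
    (ha.mul_norm hc).comp_injective (i := fun n : ℕ ↦ (n, n)) fun _ _ h ↦ congrArg Prod.fst h
  rw [torusAverage, circleAverage_congr_sphere hinner,
    circleAverage_tsum_pow_mul_tsum_conj_pow hb hac]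
  exact tsum_congr fun n ↦ by ring

end TorusAverage

/-- A continuous extension to `ℂ × ℂ` of the function `exp (x + y + 1 / (x * y))` on the torus
`|x| = |y| = 1`, with the inverse replaced by the conjugate to avoid the pole. -/
noncomputable def expKernel (x y : ℂ) : ℂ :=
  Complex.exp (x + y + conj (x * y))

/-- The `cosh` integrand, in terms of `x = exp (i s)` and `y = exp (i t)`. -/
noncomputable def coshKernel (x y : ℂ) : ℝ :=
  exp (x.re + x.re * y.re + y.re) * cos (x.im - x.im * y.re) * cos (x.re * y.im - y.im) *
    cosh (x.im * y.im)

/-- The `sinh` integrand, in terms of `x = exp (i s)` and `y = exp (i t)`. -/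
noncomputable def sinhKernel (x y : ℂ) : ℝ :=
  exp (x.re + x.re * y.re + y.re) * sin (x.im - x.im * y.re) * sin (x.re * y.im - y.im) *
    sinh (x.im * y.im)

lemma continuous_expKernel : Continuous (uncurry expKernel) := by
  unfold uncurry expKernel
  fun_prop

lemma continuous_sinhKernel : Continuous (uncurry sinhKernel) := by
  unfold uncurry sinhKernel
  fun_prop

lemma re_expKernel (x y : ℂ) :
    (expKernel x y).re = exp (x.re + x.re * y.re + y.re - x.im * y.im) *
      cos ((x.im - x.im * y.re) - (x.re * y.im - y.im)) := by
  rw [expKernel, Complex.exp_re]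
  simp only [Complex.add_re, Complex.add_im, Complex.conj_re, Complex.conj_im, Complex.mul_re,
    Complex.mul_im]
  ring_nf

lemma re_expKernel_conj_right (x y : ℂ) :
    (expKernel x (conj y)).re = exp (x.re + x.re * y.re + y.re + x.im * y.im) *
      cos ((x.im - x.im * y.re) + (x.re * y.im - y.im)) := by
  rw [re_expKernel, Complex.conj_re, Complex.conj_im]
  ring_nf

lemma re_expKernel_add_re_expKernel_conj_right (x y : ℂ) :
    (expKernel x y).re + (expKernel x (conj y)).re = 2 * (coshKernel x y - sinhKernel x y) := by
  rw [re_expKernel, re_expKernel_conj_right, exp_sub, exp_add _ (x.im * y.im), cos_sub, cos_add,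
    coshKernel, sinhKernel, cosh_eq, sinh_eq, exp_neg]
  ring

lemma exp_eq_tsum_inv_factorial_mul_pow (z : ℂ) :
    Complex.exp z = ∑' n : ℕ, (n ! : ℂ)⁻¹ * z ^ n := by
  simp [Complex.exp_eq_exp_ℂ, NormedSpace.exp_eq_tsum (𝕂 := ℂ)]

lemma torusAverage_expKernel :
    torusAverage expKernel = ((∑' n : ℕ, 1 / (n ! : ℝ) ^ 3 : ℝ) : ℂ) := by
  have hsum : Summable fun n : ℕ ↦ ‖(n ! : ℂ)⁻¹‖ := by
    simpa using summable_pow_div_factorial 1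
  calc torusAverage expKernel
    _ = ∑' n : ℕ, (n ! : ℂ)⁻¹ * (n ! : ℂ)⁻¹ * (n ! : ℂ)⁻¹ := by
      rw [← torusAverage_tsum_mul_tsum_mul_tsum hsum hsum hsum]
      simp_rw [← exp_eq_tsum_inv_factorial_mul_pow, ← Complex.exp_add]
      rfl
    _ = ∑' n : ℕ, 1 / (n ! : ℂ) ^ 3 := tsum_congr fun n ↦ by ring
    _ = ((∑' n : ℕ, 1 / (n ! : ℝ) ^ 3 : ℝ) : ℂ) := by push_cast; rfl

lemma torusAverage_coshKernel_sub_torusAverage_sinhKernel :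
    torusAverage coshKernel - torusAverage sinhKernel = (torusAverage expKernel).re := by
  have hconj : Continuous (uncurry fun x y ↦ expKernel x (conj y)) :=
    continuous_expKernel.comp (by fun_prop : Continuous fun p : ℂ × ℂ ↦ (p.1, conj p.2))
  have hsum : Continuous (uncurry fun x y ↦ expKernel x y + expKernel x (conj y)) :=
    continuous_expKernel.add hconj
  let halfRe : ℂ →L[ℝ] ℝ := (1 / 2 : ℝ) • Complex.reCLM
  have hhalf : Continuous (uncurry fun x y ↦ halfRe (expKernel x y + expKernel x (conj y))) :=
    halfRe.continuous.comp hsum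
  have hkernel (x y : ℂ) :
      coshKernel x y = sinhKernel x y + halfRe (expKernel x y + expKernel x (conj y)) := by
    simp [halfRe, re_expKernel_add_re_expKernel_conj_right]
  rw [sub_eq_iff_eq_add']
  calc torusAverage coshKernel
    _ = torusAverage fun x y ↦ sinhKernel x y + halfRe (expKernel x y + expKernel x (conj y)) :=
      congrArg torusAverage (funext₂ hkernel)
    _ = torusAverage sinhKernel + halfRe (torusAverage expKernel + torusAverage expKernel) := by
      rw [torusAverage_add continuous_sinhKernel hhalf,
        torusAverage_clm_comp halfRe hsum, torusAverage_add continuous_expKernel hconj,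
        torusAverage_comp_conj_right]
    _ = torusAverage sinhKernel + (torusAverage expKernel).re := by simp [halfRe, ← two_mul]

/-- Real double-integral identity for `∑ 1/(n!)³`. -/
theorem sum_inv_factorial_cube_double_integral :
    (∑' n : ℕ, 1 / (n ! : ℝ) ^ 3) =
      (1 / (4 * Real.pi ^ 2)) *
        (∫ t in (0:ℝ)..(2 * Real.pi), ∫ s in (0:ℝ)..(2 * Real.pi),
          Real.exp (Real.cos s + Real.cos s * Real.cos t + Real.cos t) *
            Real.cos (Real.sin s - Real.sin s * Real.cos t) *
            Real.cos (Real.cos s * Real.sin t - Real.sin t) *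
            Real.cosh (Real.sin s * Real.sin t)) -
      (1 / (4 * Real.pi ^ 2)) *
        (∫ t in (0:ℝ)..(2 * Real.pi), ∫ s in (0:ℝ)..(2 * Real.pi),
          Real.exp (Real.cos s + Real.cos s * Real.cos t + Real.cos t) *
            Real.sin (Real.sin s - Real.sin s * Real.cos t) *
            Real.sin (Real.cos s * Real.sin t - Real.sin t) *
            Real.sinh (Real.sin s * Real.sin t)) := by
  rw [← Complex.ofReal_re (∑' n : ℕ, 1 / (n ! : ℝ) ^ 3), ← torusAverage_expKernel,
    ← torusAverage_coshKernel_sub_torusAverage_sinhKernel,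
    torusAverage_eq_integral, torusAverage_eq_integral]
  simp only [coshKernel, sinhKernel, circleMap_zero_re, circleMap_zero_im, one_mul, smul_eq_mul]
end

section
/- The function y(x) = ∑_{n=0}^∞ x^n/(n!)^3 satisfies the third-order linear differential equation x^2·y'''(x) + 3x·y''(x) + y'(x) − y(x) = 0 for all real x. -/
open Nat Real

/-!
A power series `f(x) = ∑ aₙ xⁿ` satisfies `xᵏ f⁽ᵏ⁾(x) = ∑ n(n-1)⋯(n-k+1) aₙ xⁿ`. Applying this to
`f'` and expanding powers in falling factorials, `mˢ = ∑ₖ S(s,k) m(m-1)⋯(m-k+1)`, turns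
`∑ₖ S(s,k) xᵏ⁻¹ f⁽ᵏ⁾(x)` into `∑ (n+1)ˢ aₙ₊₁ xⁿ`. For `aₙ = 1/(n!)ˢ` this is again `f`, because
`(n+1)ˢ aₙ₊₁ = aₙ`. Starting from `f'` rather than `f` avoids a division by `x`, so that `x = 0`
needs no separate treatment.
-/

open Filter Finset FormalMultilinearSeries Topology

theorem sum_stirlingSecond_mul_descFactorial (s n : ℕ) :
    ∑ k ∈ range (s + 1), stirlingSecond s k * n.descFactorial k = n ^ s := by
  induction s with
  | zero => simp
  | succ s ih =>
    have mul_descFactorial (k : ℕ) :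
        n * n.descFactorial k = n.descFactorial (k + 1) + k * n.descFactorial k := by
      rcases le_or_gt k n with hk | hk
      · rw [descFactorial_succ, ← add_mul, Nat.sub_add_cancel hk]
      · simp only [descFactorial_of_lt hk, descFactorial_of_lt (hk.trans k.lt_succ_self), mul_zero,
          add_zero]
    have sum_shift :
        ∑ k ∈ range (s + 1), (k + 1) * stirlingSecond s (k + 1) * n.descFactorial (k + 1) =
          ∑ k ∈ range (s + 1), k * stirlingSecond s k * n.descFactorial k := by
      rw [sum_range_succ, sum_range_succ' _ s, stirlingSecond_eq_zero_of_lt s.lt_succ_self]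
      simp only [mul_zero, zero_mul]
    calc ∑ k ∈ range (s + 2), stirlingSecond (s + 1) k * n.descFactorial k
      _ = ∑ k ∈ range (s + 1), (k + 1) * stirlingSecond s (k + 1) * n.descFactorial (k + 1) +
            ∑ k ∈ range (s + 1), stirlingSecond s k * n.descFactorial (k + 1) := by
        simp only [sum_range_succ' _ (s + 1), stirlingSecond_succ_succ, stirlingSecond_succ_zero,
          zero_mul, add_zero, add_mul, sum_add_distrib]
      _ = ∑ k ∈ range (s + 1), n * (stirlingSecond s k * n.descFactorial k) := by
        rw [sum_shift, ← sum_add_distrib]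
        refine sum_congr rfl fun k _ => ?_
        rw [mul_left_comm n, mul_descFactorial]
        ring
      _ = n ^ (s + 1) := by rw [← mul_sum, ih, pow_succ']

theorem sum_stirlingSecond_succ_mul_descFactorial_succ {s : ℕ} (hs : s ≠ 0) (n : ℕ) :
    ∑ k ∈ range s, stirlingSecond s (k + 1) * n.descFactorial (k + 1) = n ^ s := by
  obtain ⟨s, rfl⟩ := exists_eq_succ_of_ne_zero hs
  rw [← sum_stirlingSecond_mul_descFactorial, sum_range_succ' _ (s + 1), stirlingSecond_succ_zero,
    zero_mul, add_zero]

theorem succ_pow_mul_inv_factorial_succ_pow {𝕜 : Type*} [Field 𝕜] [CharZero 𝕜] (s n : ℕ) :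
    ((n : 𝕜) + 1) ^ s * (((n + 1)! : 𝕜) ^ s)⁻¹ = ((n ! : 𝕜) ^ s)⁻¹ := by
  have hn : (n : 𝕜) + 1 ≠ 0 := cast_add_one_ne_zero n
  rw [factorial_succ, cast_mul, cast_succ, mul_pow, mul_inv,
    mul_inv_cancel_left₀ (pow_ne_zero s hn)]

section PowerSeries

variable {𝕜 : Type*} [NontriviallyNormedField 𝕜] [CompleteSpace 𝕜]
  {f : 𝕜 → 𝕜} {a : ℕ → 𝕜} {z x : 𝕜} {r : ENNReal}

theorem hasFPowerSeriesOnBall_deriv (hf : HasFPowerSeriesOnBall f (ofScalars 𝕜 a) z r) :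
    HasFPowerSeriesOnBall (deriv f) (ofScalars 𝕜 fun n => (n + 1) * a (n + 1)) z r := by
  convert! (ContinuousLinearMap.apply 𝕜 𝕜 (1 : 𝕜)).comp_hasFPowerSeriesOnBall hf.fderiv
  ext n
  simp

theorem hasFPowerSeriesOnBall_iteratedDeriv (hf : HasFPowerSeriesOnBall f (ofScalars 𝕜 a) z r)
    (k : ℕ) :
    HasFPowerSeriesOnBall (iteratedDeriv k f)
      (ofScalars 𝕜 fun n => (n + k).descFactorial k * a (n + k)) z r := by
  induction k with
  | zero => simpa using hf
  | succ k ih =>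
    rw [iteratedDeriv_succ]
    convert hasFPowerSeriesOnBall_deriv ih using 3 with n
    rw [show n + (k + 1) = n + 1 + k by ring, descFactorial_succ, Nat.add_sub_cancel]
    push_cast
    ring

theorem hasSum_pow_mul_iteratedDeriv (hf : HasFPowerSeriesOnBall f (ofScalars 𝕜 a) z r)
    (hx : x ∈ Metric.eball 0 r) (k : ℕ) :
    HasSum (fun n => n.descFactorial k * a n * x ^ n) (x ^ k * iteratedDeriv k f (z + x)) := by
  have initial_terms : ∑ n ∈ range k, (n.descFactorial k * a n * x ^ n : 𝕜) = 0 :=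
    sum_eq_zero fun n hn => by
      rw [descFactorial_of_lt (mem_range.mp hn), cast_zero, zero_mul, zero_mul]
  rw [← hasSum_nat_add_iff' k, initial_terms, sub_zero]
  refine (((hasFPowerSeriesOnBall_iteratedDeriv hf k).hasSum hx).mul_left (x ^ k)).congr_fun
    fun n => ?_
  rw [ofScalars_apply_eq, smul_eq_mul, pow_add]
  ring

theorem hasSum_pow_mul_iteratedDeriv_succ (hf : HasFPowerSeriesOnBall f (ofScalars 𝕜 a) z r)
    (hx : x ∈ Metric.eball 0 r) (k : ℕ) :
    HasSum (fun n => (n + 1).descFactorial (k + 1) * a (n + 1) * x ^ n)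
      (x ^ k * iteratedDeriv (k + 1) f (z + x)) := by
  rw [iteratedDeriv_succ']
  refine (hasSum_pow_mul_iteratedDeriv (hasFPowerSeriesOnBall_deriv hf) hx k).congr_fun fun n => ?_
  rw [succ_descFactorial_succ]
  push_cast
  ring

theorem hasSum_sum_stirlingSecond_mul_iteratedDeriv
    (hf : HasFPowerSeriesOnBall f (ofScalars 𝕜 a) z r) (hx : x ∈ Metric.eball 0 r)
    {s : ℕ} (hs : s ≠ 0) :
    HasSum (fun n : ℕ => ((n + 1) ^ s * a (n + 1) * x ^ n : 𝕜))
      (∑ k ∈ range s, stirlingSecond s (k + 1) * (x ^ k * iteratedDeriv (k + 1) f (z + x))) := by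
  refine (hasSum_sum fun k _ => (hasSum_pow_mul_iteratedDeriv_succ hf hx k).mul_left
    (stirlingSecond s (k + 1) : 𝕜)).congr_fun fun n => ?_
  have pow_expansion : ((n : 𝕜) + 1) ^ s =
      ∑ k ∈ range s, (stirlingSecond s (k + 1) : 𝕜) * (n + 1).descFactorial (k + 1) := by
    exact_mod_cast
      congrArg (Nat.cast : ℕ → 𝕜) (sum_stirlingSecond_succ_mul_descFactorial_succ hs (n + 1)).symm
  simp only [pow_expansion, sum_mul, mul_assoc]

end PowerSeries

section Alpha

variable {𝕜 : Type*} [RCLike 𝕜] {s : ℕ}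

/-- The alpha function `α(x, s) = ∑ xⁿ/(n!)ˢ`. For `s ≠ 0` the series converges everywhere; for
`s = 0` it is the geometric series, and outside its disc of convergence the value is `0`. -/
noncomputable def alphaFunction (s : ℕ) (x : 𝕜) : 𝕜 :=
  ∑' n : ℕ, x ^ n / (n ! : 𝕜) ^ s

theorem radius_ofScalars_inv_factorial_pow (hs : s ≠ 0) :
    (ofScalars 𝕜 fun n => ((n ! : 𝕜) ^ s)⁻¹).radius = ⊤ := by
  have coeff_ne_zero (n : ℕ) : ((n ! : 𝕜) ^ s)⁻¹ ≠ 0 :=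
    inv_ne_zero (pow_ne_zero s (cast_ne_zero.mpr n.factorial_ne_zero))
  have coeff_ratio (n : ℕ) :
      ‖(((n + 1)! : 𝕜) ^ s)⁻¹‖ / ‖((n ! : 𝕜) ^ s)⁻¹‖ = (1 / ((n : ℝ) + 1)) ^ s := by
    rw [← succ_pow_mul_inv_factorial_succ_pow s n, norm_mul, norm_pow, ← cast_succ,
      RCLike.norm_natCast, div_mul_cancel_right₀ (norm_ne_zero_iff.mpr (coeff_ne_zero (n + 1))),
      one_div, inv_pow, cast_succ]
  refine ofScalars_radius_eq_top_of_tendsto 𝕜 _ (.of_forall coeff_ne_zero) ?_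
  simpa only [succ_eq_add_one, coeff_ratio, zero_pow hs] using
    (tendsto_one_div_add_atTop_nhds_zero_nat (𝕜 := ℝ)).pow s

theorem hasFPowerSeriesOnBall_alphaFunction (hs : s ≠ 0) :
    HasFPowerSeriesOnBall (alphaFunction s : 𝕜 → 𝕜)
      (ofScalars 𝕜 fun n => ((n ! : 𝕜) ^ s)⁻¹) 0 ⊤ := by
  have sum_eq : (ofScalars 𝕜 fun n => ((n ! : 𝕜) ^ s)⁻¹).sum = alphaFunction s :=
    funext fun x => tsum_congr fun n => by
      rw [ofScalars_apply_eq, smul_eq_mul, div_eq_inv_mul]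
  have hradius := radius_ofScalars_inv_factorial_pow (𝕜 := 𝕜) hs
  rw [← sum_eq, ← hradius]
  exact FormalMultilinearSeries.hasFPowerSeriesOnBall _ (hradius ▸ ENNReal.zero_lt_top)

theorem alpha_three_ode_general (hs : s ≠ 0) (x : 𝕜) :
    ∑ k ∈ range s, stirlingSecond s (k + 1) * (x ^ k * iteratedDeriv (k + 1) (alphaFunction s) x) =
      alphaFunction s x := by
  have hsum := hasSum_sum_stirlingSecond_mul_iteratedDeriv
    (hasFPowerSeriesOnBall_alphaFunction hs) (x := x) (by simp) hs
  simp only [succ_pow_mul_inv_factorial_succ_pow, zero_add, ← div_eq_inv_mul] at hsum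
  exact hsum.tsum_eq.symm

end Alpha

/-- `y(x) = ∑ xⁿ/(n!)³` satisfies `x² y''' + 3x y'' + y' - y = 0`. -/
theorem alpha_three_ode (x : ℝ) :
    x ^ 2 * deriv (deriv (deriv (fun x : ℝ => ∑' n : ℕ, x ^ n / (n ! : ℝ) ^ 3))) x +
        3 * x * deriv (deriv (fun x : ℝ => ∑' n : ℕ, x ^ n / (n ! : ℝ) ^ 3)) x +
        deriv (fun x : ℝ => ∑' n : ℕ, x ^ n / (n ! : ℝ) ^ 3) x -
        (∑' n : ℕ, x ^ n / (n ! : ℝ) ^ 3) = 0 := by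
  have stirling_values :
      stirlingSecond 3 1 = 1 ∧ stirlingSecond 3 2 = 3 ∧ stirlingSecond 3 3 = 1 :=
    ⟨rfl, rfl, rfl⟩
  have ode := alpha_three_ode_general three_ne_zero x
  simp only [sum_range_succ, range_zero, sum_empty, zero_add, reduceAdd, stirling_values,
    iteratedDeriv_succ, iteratedDeriv_zero, cast_one, cast_ofNat] at ode
  change x ^ 2 * deriv (deriv (deriv (alphaFunction 3))) x +
    3 * x * deriv (deriv (alphaFunction 3)) x + deriv (alphaFunction 3) x -
      alphaFunction 3 x = 0
  linear_combination ode
end
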